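/- Let d : ℕ, let Σ be a real symmetric positive semidefinite d×d matrix, let β : ℝ → ℝ be continuous with β s > 0 for all s, and set B t = ∫_0^t β s ds and Σ_t = exp(−2·B t)·Σ + (1 − exp(−2·B t))·I. Then for every t > 0, writing sqrt for the positive semidefinite matrix square root, the map t ↦ sqrt(Σ_t) has derivative β t • ((I − Σ_t) * (sqrt(Σ_t))⁻¹) at t, i.e. HasDerivAt (fun t => sqrt(Σ_t)) ((β t) • ((I − Σ_t) * (sqrt(Σ_t))⁻¹)) t. -/

import Mathlib

open Matrix

attribute [local instance] Matrix.normedAddCommGroup Matrix.normedSpace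

open scoped ComplexOrder in
/-- The positive semidefinite square root of a positive semidefinite matrix
(the definition of the older Mathlib, since removed). -/
noncomputable def Matrix.PosSemidef.sqrt {n 𝕜 : Type*} [Fintype n] [RCLike 𝕜] [DecidableEq n]
    {A : Matrix n n 𝕜} (hA : A.PosSemidef) : Matrix n n 𝕜 :=
  hA.1.eigenvectorUnitary.1 * diagonal ((↑) ∘ Real.sqrt ∘ hA.1.eigenvalues) *
    (star hA.1.eigenvectorUnitary : Matrix n n 𝕜)

/-- The unique positive semidefinite square root of a positive semidefinite real matrix
(extended by `0` to non-positive-semidefinite matrices). -/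
noncomputable def psdSqrt {d : ℕ} (M : Matrix (Fin d) (Fin d) ℝ) : Matrix (Fin d) (Fin d) ℝ :=
  open scoped Classical in
  if h : M.PosSemidef then h.sqrt else 0

open Filter Topology Ring

section StarOrderedAlgebra

variable {A : Type*} [NormedRing A] [StarRing A] [NormedAlgebra ℝ A] [PartialOrder A]
  [StarOrderedRing A] [NonnegSpectrumClass ℝ A]
  [IsometricContinuousFunctionalCalculus ℝ A IsSelfAdjoint]

theorem eventually_nonneg_of_tendsto_isStrictlyPositive {ι : Type*} {l : Filter ι} {f : ι → A}
    {a : A} (ha : IsStrictlyPositive a) (hf : Tendsto f l (𝓝 a))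
    (hsa : ∀ᶠ i in l, IsSelfAdjoint (f i)) : ∀ᶠ i in l, 0 ≤ f i := by
  nontriviality A
  obtain ⟨r, hr, hra⟩ := (CFC.exists_pos_algebraMap_le_iff ha.isSelfAdjoint).2
    fun _ hx ↦ ha.spectrum_pos hx
  filter_upwards [hsa, Metric.tendsto_nhds.1 hf r hr] with i hi hir
  have hsub : IsSelfAdjoint (f i - a) := hi.sub ha.isSelfAdjoint
  have hlower : algebraMap ℝ A (-r) ≤ f i - a := by
    refine (algebraMap_le_iff_le_spectrum hsub).2 fun x hx ↦ (abs_le.1 ?_).1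
    calc |x| ≤ ‖f i - a‖ := IsometricContinuousFunctionalCalculus.norm_spectrum_le _ hx hsub
      _ ≤ r := dist_eq_norm (f i) a ▸ hir.le
  simpa using add_le_add hlower hra

variable [CompleteSpace A] [ContinuousStar A]

/- For commuting arguments `(√f(u) - √f(t)) (√f(u) + √f(t)) = f(u) - f(t)`, so the difference
quotients of `√f` are those of `f` divided by `√f(u) + √f(t) → 2 √f(t)`. -/
theorem hasDerivAt_cfcSqrt_of_commute {f : ℝ → A} {f' : A} {t : ℝ} (hf : HasDerivAt f f' t)
    (hsa : ∀ᶠ u in 𝓝 t, IsSelfAdjoint (f u)) (hcomm : ∀ᶠ u in 𝓝 t, Commute (f u) (f t))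
    (hpos : IsStrictlyPositive (f t)) :
    HasDerivAt (fun u ↦ CFC.sqrt (f u)) ((1 / 2 : ℝ) • (f' * (CFC.sqrt (f t))⁻¹ʳ)) t := by
  have hnonneg : ∀ᶠ u in 𝓝 t, 0 ≤ f u :=
    eventually_nonneg_of_tendsto_isStrictlyPositive hpos hf.continuousAt hsa
  have hsum : Tendsto (fun u ↦ CFC.sqrt (f u) + CFC.sqrt (f t)) (𝓝 t)
      (𝓝 ((2 : ℝ) • CFC.sqrt (f t))) := by
    rw [two_smul]
    exact ((CFC.continuousOn_sqrt (f t) hpos.nonneg).tendsto.comp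
      (tendsto_nhdsWithin_iff.2 ⟨hf.continuousAt, hnonneg⟩)).add_const _
  have hunit : IsUnit ((2 : ℝ) • CFC.sqrt (f t)) :=
    hpos.isUnit_cfcSqrt.smul (Units.mk0 (2 : ℝ) two_ne_zero)
  have hslope : ∀ᶠ u in 𝓝 t, slope f t u * (CFC.sqrt (f u) + CFC.sqrt (f t))⁻¹ʳ =
      slope (fun u ↦ CFC.sqrt (f u)) t u := by
    filter_upwards [hnonneg, hcomm, hsum (Units.isOpen.mem_nhds hunit)] with u hu huc huu
    have hc : Commute (CFC.sqrt (f u)) (CFC.sqrt (f t)) :=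
      ((huc.cfcₙ_nnreal _).symm.cfcₙ_nnreal _).symm
    rw [eq_comm, eq_mul_inverse_iff_mul_eq _ _ _ huu, slope_def_module, slope_def_module,
      smul_mul_assoc, ← hc.mul_self_sub_mul_self_eq', CFC.sqrt_mul_sqrt_self _ hu,
      CFC.sqrt_mul_sqrt_self _ hpos.nonneg]
  have hlim : (1 / 2 : ℝ) • (f' * (CFC.sqrt (f t))⁻¹ʳ) = f' * ((2 : ℝ) • CFC.sqrt (f t))⁻¹ʳ := by
    rw [eq_mul_inverse_iff_mul_eq _ _ _ hunit, smul_mul_smul_comm,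
      inverse_mul_cancel_right _ _ hpos.isUnit_cfcSqrt]
    norm_num
  have hinv : ContinuousAt inverse ((2 : ℝ) • CFC.sqrt (f t)) :=
    hunit.unit_spec ▸ NormedRing.inverse_continuousAt hunit.unit
  rw [hasDerivAt_iff_tendsto_slope, hlim]
  exact (hf.tendsto_slope.mul ((hinv.tendsto.comp hsum).mono_left nhdsWithin_le_nhds)).congr'
    (hslope.filter_mono nhdsWithin_le_nhds)

end StarOrderedAlgebra

/-- The covariance at diffusion time `τ` of the Ornstein–Uhlenbeck flow `dX = -X dτ + √2 dW`
started from covariance `s`; the covariance `Σ_t` of the noise schedule `β` is the value at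
`τ = B t`. -/
noncomputable def forwardCovariance {A : Type*} [AddCommGroup A] [One A] [Module ℝ A] (s : A)
    (τ : ℝ) : A :=
  Real.exp (-2 * τ) • s + (1 - Real.exp (-2 * τ)) • (1 : A)

theorem hasDerivAt_forwardCovariance {A : Type*} [NormedAddCommGroup A] [One A] [NormedSpace ℝ A]
    (s : A) (τ : ℝ) :
    HasDerivAt (forwardCovariance s) ((2 : ℝ) • (1 - forwardCovariance s τ)) τ := by
  have hexp : HasDerivAt (fun u ↦ Real.exp (-2 * u)) (Real.exp (-2 * τ) * -2) τ := by
    simpa using ((hasDerivAt_id τ).const_mul (-2)).exp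
  refine ((hexp.smul_const s).add ((hexp.const_sub 1).smul_const 1)).congr_deriv ?_
  simp only [forwardCovariance]
  module

theorem isSelfAdjoint_forwardCovariance_iff {A : Type*} [Ring A] [StarRing A] [Algebra ℝ A]
    [StarModule ℝ A] {s : A} {τ : ℝ} :
    IsSelfAdjoint (forwardCovariance s τ) ↔ IsSelfAdjoint s := by
  simp [forwardCovariance, isSelfAdjoint_iff]

theorem commute_forwardCovariance {A : Type*} [Ring A] [Algebra ℝ A] (s : A) (τ σ : ℝ) :
    Commute (forwardCovariance s τ) (forwardCovariance s σ) := by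
  have hs (σ : ℝ) : Commute s (forwardCovariance s σ) :=
    ((Commute.refl s).smul_right _).add_right ((Commute.one_right s).smul_right _)
  exact ((hs σ).smul_left _).add_left ((Commute.one_left _).smul_left _)

open scoped ComplexOrder in
theorem posDef_forwardCovariance {n 𝕜 : Type*} [DecidableEq n] [RCLike 𝕜]
    {S : Matrix n n 𝕜} (hS : S.PosSemidef) {τ : ℝ} (hτ : 0 < τ) :
    (forwardCovariance S τ).PosDef := by
  have hexp : Real.exp (-2 * τ) < 1 := Real.exp_lt_one_iff.2 (by linarith)
  exact PosDef.posSemidef_add (hS.smul (Real.exp_nonneg _)) (PosDef.one.smul (sub_pos.2 hexp))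

section MatrixSqrt

open scoped ComplexOrder MatrixOrder

theorem posSemidef_sqrt_eq_cfcSqrt {n 𝕜 : Type*} [Fintype n] [DecidableEq n] [RCLike 𝕜]
    {M : Matrix n n 𝕜} (hM : M.PosSemidef) : hM.sqrt = CFC.sqrt M := by
  rw [CFC.sqrt_eq_real_sqrt M hM.nonneg, cfcₙ_eq_cfc, hM.1.cfc_eq]
  rfl

theorem psdSqrt_eq_cfcSqrt {d : ℕ} (M : Matrix (Fin d) (Fin d) ℝ) : psdSqrt M = CFC.sqrt M := by
  rw [psdSqrt]
  split_ifs with hM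
  · exact posSemidef_sqrt_eq_cfcSqrt hM
  · exact (CFC.sqrt_of_not_nonneg (mt Matrix.nonneg_iff_posSemidef.1 hM)).symm

end MatrixSqrt

theorem forward_covariance_sqrt_deriv_general {A : Type*} [NormedRing A] [StarRing A]
    [NormedAlgebra ℝ A] [PartialOrder A] [StarOrderedRing A] [NonnegSpectrumClass ℝ A]
    [IsometricContinuousFunctionalCalculus ℝ A IsSelfAdjoint] [CompleteSpace A]
    [ContinuousStar A] [StarModule ℝ A] {s : A} {B : ℝ → ℝ} {b t : ℝ} (hB : HasDerivAt B b t)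
    (hpos : IsStrictlyPositive (forwardCovariance s (B t))) :
    HasDerivAt (fun u ↦ CFC.sqrt (forwardCovariance s (B u)))
      (b • ((1 - forwardCovariance s (B t)) *
        (CFC.sqrt (forwardCovariance s (B t)))⁻¹ʳ)) t := by
  have hs : IsSelfAdjoint s := isSelfAdjoint_forwardCovariance_iff.1 hpos.isSelfAdjoint
  have hsqrt := hasDerivAt_cfcSqrt_of_commute (hasDerivAt_forwardCovariance s (B t))
    (.of_forall fun _ ↦ isSelfAdjoint_forwardCovariance_iff.2 hs)
    (.of_forall fun τ ↦ commute_forwardCovariance s τ (B t)) hpos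
  refine (hsqrt.scomp t hB).congr_deriv ?_
  rw [smul_mul_assoc]
  module

/-- Derivative of the square root of the forward covariance:
`d[Σ_t^{1/2}] = β t (I - Σ_t) Σ_t^{-1/2} dt` for `t > 0` (key tool for Proposition 3). -/
theorem forward_covariance_sqrt_deriv
    (d : ℕ) (S : Matrix (Fin d) (Fin d) ℝ)
    (hS_sym : S.IsSymm) (hS_psd : S.PosSemidef)
    (β : ℝ → ℝ) (hβ : Continuous β) (hβpos : ∀ s, 0 < β s)
    (B : ℝ → ℝ) (hB : ∀ t, B t = ∫ s in (0:ℝ)..t, β s)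
    (St : ℝ → Matrix (Fin d) (Fin d) ℝ)
    (hSt : ∀ t, St t = Real.exp (-2 * B t) • S
      + (1 - Real.exp (-2 * B t)) • (1 : Matrix (Fin d) (Fin d) ℝ))
    (t : ℝ) (ht : 0 < t) :
    HasDerivAt (fun u => psdSqrt (St u))
      ((β t) • (((1 : Matrix (Fin d) (Fin d) ℝ) - St t) * (psdSqrt (St t))⁻¹)) t := by
  have hBderiv : HasDerivAt B (β t) t :=
    funext hB ▸ intervalIntegral.integral_hasDerivAt_right (hβ.intervalIntegrable _ _)
      (hβ.stronglyMeasurableAtFilter _ _) hβ.continuousAt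
  have hBpos : 0 < B t :=
    hB t ▸ intervalIntegral.intervalIntegral_pos_of_pos (hβ.intervalIntegrable _ _) hβpos ht
  obtain rfl : St = fun u ↦ forwardCovariance S (B u) := funext hSt
  simp only [psdSqrt_eq_cfcSqrt, nonsing_inv_eq_ringInverse]
  -- Derivatives depend on the norm only through its topology, so the C⋆-norm may be used here.
  open scoped Matrix.Norms.L2Operator MatrixOrder in
  exact forward_covariance_sqrt_deriv_general hBderiv
    (posDef_forwardCovariance hS_psd hBpos).isStrictlyPositive
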